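/- Let 1 ≤ k ≤ n and let A ∈ Λ_n^k be a canonical matrix with associated row values x_1 ≤ x_2 ≤ ⋯ ≤ x_n. Then x_1 = 2^k − 1, i.e. the first row of A, read as a binary number, equals 2^k − 1. -/

import Mathlib

/-- `Lambda n k` : the set of `n×n` binary matrices with exactly `k` ones
in each row and each column. -/
def Lambda (n k : ℕ) : Set (Matrix (Fin n) (Fin n) Bool) :=
  {A | (∀ i, (Finset.univ.filter fun j => A i j = true).card = k) ∧
       (∀ j, (Finset.univ.filter fun i => A i j = true).card = k)}

/-- `A ∼ B` iff `A` is obtained from `B` by permuting rows and/or columns. -/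
def rcEquiv {n : ℕ} (A B : Matrix (Fin n) (Fin n) Bool) : Prop :=
  ∃ σ τ : Equiv.Perm (Fin n), ∀ i j, A i j = B (σ i) (τ j)

/-- `mu n k` : the number of equivalence classes of `Λ_n^k` under `∼`. -/
noncomputable def mu (n k : ℕ) : ℕ :=
  Nat.card (Quot fun A B : {M : Matrix (Fin n) (Fin n) Bool // M ∈ Lambda n k} =>
    rcEquiv A.1 B.1)

/-- The natural number whose `n`-digit binary representation is row `i` of `A`. -/
def rowVal {n : ℕ} (A : Matrix (Fin n) (Fin n) Bool) (i : Fin n) : ℕ :=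
  ∑ j : Fin n, if A i j = true then 2 ^ (n - 1 - (j : ℕ)) else 0

/-- A matrix is canonical when the row values of `A` and of `Aᵀ` are both
nondecreasing. -/
def IsCanonical {n : ℕ} (A : Matrix (Fin n) (Fin n) Bool) : Prop :=
  Monotone (rowVal A) ∧ Monotone (rowVal A.transpose)

/-!
The `j`-th column value is at least `2 ^ (n - 1)` exactly when the column starts with a one. So when
the column values increase, the entries of the first row increase from `0` to `1`: its ones fill the
lowest binary places `0, …, k - 1`, and the row value is `∑ m < k, 2 ^ m = 2 ^ k - 1`.
-/

theorem two_pow_le_sum_two_pow_iff_mem {s : Finset ℕ} {N : ℕ} (hs : ∀ m ∈ s, m ≤ N) :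
    2 ^ N ≤ ∑ m ∈ s, 2 ^ m ↔ N ∈ s := by
  refine ⟨fun hle => ?_, Finset.single_le_sum (f := (2 ^ · : ℕ → ℕ)) fun _ _ => Nat.zero_le _⟩
  by_contra hN
  have hlt : ∀ m ∈ s, m < N := fun m hm => (hs m hm).lt_of_ne (ne_of_mem_of_not_mem hm hN)
  exact (Nat.geomSum_lt le_rfl hlt).not_ge hle

theorem eq_range_card_of_isLowerSet {s : Finset ℕ} (hs : IsLowerSet (s : Set ℕ)) :
    s = Finset.range s.card := by
  obtain huniv | ⟨a, ha⟩ := hs.eq_univ_or_Iio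
  · exact absurd (huniv ▸ s.finite_toSet) Set.infinite_univ
  · obtain rfl : s = Finset.range a := by rw [← Finset.coe_inj, ha, Finset.coe_range]
    rw [Finset.card_range]

theorem sum_two_pow_of_isLowerSet {s : Finset ℕ} (hs : IsLowerSet (s : Set ℕ)) :
    ∑ m ∈ s, 2 ^ m = 2 ^ s.card - 1 := by
  conv_lhs => rw [eq_range_card_of_isLowerSet hs]
  rw [Nat.geomSum_eq le_rfl, Nat.div_one]

section

variable {n : ℕ}

/-- The binary places holding a one in the word `v`, read as an `n`-digit binary number. The first
letter is the most significant digit, so letter `j` sits at place `j.rev`. -/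
def bitPlaces (v : Fin n → Bool) : Finset ℕ :=
  (Finset.univ.filter fun j => v j = true).map (Fin.revPerm.toEmbedding.trans Fin.valEmbedding)

theorem mem_bitPlaces {v : Fin n → Bool} {m : ℕ} :
    m ∈ bitPlaces v ↔ ∃ j : Fin n, v j = true ∧ (j.rev : ℕ) = m := by
  simp [bitPlaces]

theorem card_bitPlaces (v : Fin n → Bool) :
    (bitPlaces v).card = (Finset.univ.filter fun j => v j = true).card :=
  Finset.card_map _

theorem rev_mem_bitPlaces {v : Fin n → Bool} {j : Fin n} :
    (j.rev : ℕ) ∈ bitPlaces v ↔ v j = true := by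
  simp only [mem_bitPlaces, Fin.val_inj, Fin.rev_inj, exists_eq_right]

theorem lt_of_mem_bitPlaces {v : Fin n → Bool} {m : ℕ} (hm : m ∈ bitPlaces v) : m < n := by
  obtain ⟨j, -, rfl⟩ := mem_bitPlaces.1 hm
  exact j.rev.isLt

theorem isLowerSet_bitPlaces {v : Fin n → Bool} (hv : Monotone v) :
    IsLowerSet (bitPlaces v : Set ℕ) := by
  intro m l hlm hm
  obtain ⟨j, hj, rfl⟩ := mem_bitPlaces.1 hm
  have hle : j ≤ Fin.rev ⟨l, hlm.trans_lt j.rev.isLt⟩ := Fin.le_rev_iff.2 hlm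
  exact mem_bitPlaces.2 ⟨_, hv hle hj, by rw [Fin.rev_rev]⟩

theorem rowVal_eq_sum_bitPlaces (A : Matrix (Fin n) (Fin n) Bool) (i : Fin n) :
    rowVal A i = ∑ m ∈ bitPlaces (A i), 2 ^ m := by
  simp [rowVal, bitPlaces, Finset.sum_filter, Fin.val_rev, Nat.sub_sub, add_comm]

theorem two_pow_le_rowVal_iff (A : Matrix (Fin n) (Fin n) Bool) (i : Fin n) (hn : 0 < n) :
    2 ^ (n - 1) ≤ rowVal A i ↔ A i ⟨0, hn⟩ = true := by
  rw [rowVal_eq_sum_bitPlaces, two_pow_le_sum_two_pow_iff_mem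
    fun m hm => Nat.le_sub_one_of_lt (lt_of_mem_bitPlaces hm)]
  exact rev_mem_bitPlaces (j := ⟨0, hn⟩)

theorem rowVal_of_monotone {A : Matrix (Fin n) (Fin n) Bool} {i : Fin n} (hA : Monotone (A i)) :
    rowVal A i = 2 ^ (Finset.univ.filter fun j => A i j = true).card - 1 := by
  rw [rowVal_eq_sum_bitPlaces, sum_two_pow_of_isLowerSet (isLowerSet_bitPlaces hA), card_bitPlaces]

theorem monotone_first_row {A : Matrix (Fin n) (Fin n) Bool} (hA : Monotone (rowVal A.transpose))
    (hn : 0 < n) : Monotone (A ⟨0, hn⟩) := by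
  intro j j' hjj' hj
  have hlead : 2 ^ (n - 1) ≤ rowVal A.transpose j := (two_pow_le_rowVal_iff _ j hn).2 hj
  exact (two_pow_le_rowVal_iff A.transpose j' hn).1 (hlead.trans (hA hjj'))

theorem first_rowVal_of_canonical_general {A : Matrix (Fin n) (Fin n) Bool}
    (hA : Monotone (rowVal A.transpose)) (hn : 0 < n) :
    rowVal A ⟨0, hn⟩ = 2 ^ (Finset.univ.filter fun j => A ⟨0, hn⟩ j = true).card - 1 :=
  rowVal_of_monotone (monotone_first_row hA hn)

end

theorem first_rowVal_of_canonical (n k : ℕ) (hk : 1 ≤ k) (hkn : k ≤ n)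
    (A : Matrix (Fin n) (Fin n) Bool) (hA : A ∈ Lambda n k)
    (hcan : IsCanonical A) :
    rowVal A ⟨0, Nat.lt_of_lt_of_le Nat.one_pos (hk.trans hkn)⟩ = 2 ^ k - 1 := by
  rw [first_rowVal_of_canonical_general hcan.2, hA.1]
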